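/- Let N ≥ 1, let x_0, x_1, …, x_N be unit vectors in a real inner product space such that ⟨x_i, x_j⟩ ≤ 1 − δ for all i ≠ j, where 0 < δ < 2. Let 0 ≤ γ < 1 and let σ ≥ 0 satisfy σ² ≥ (1/δ) · log( N(1+γ)(2−δ) / (2(1−γ)) ). Then for every index i, (1 + γ) · Σ_{j ≠ i} |k_σ(x_i, x_j)| ≤ (1 − γ) · k_σ(x_i, x_i), where k_σ(x, x') = (1 + ⟨x, x'⟩) · exp(σ²(⟨x, x'⟩ − 1)). (This is the key inequality established in the proof of Theorem 1: under these hypotheses the NTK kernel matrix of the 2-layer LFF architecture satisfies the condition of Achiam et al. for the Bellman update to be a contraction.) -/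

import Mathlib

open scoped RealInnerProductSpace

/-- The 2-layer Fourier-feature NTK kernel `k_σ(x, x') = (1 + ⟪x, x'⟫) · exp(σ²(⟪x, x'⟫ − 1))`. -/
noncomputable def lffKernel {E : Type*} [NormedAddCommGroup E] [InnerProductSpace ℝ E]
    (σ : ℝ) (x x' : E) : ℝ :=
  (1 + ⟪x, x'⟫) * Real.exp (σ ^ 2 * (⟪x, x'⟫ - 1))

/-!
A kernel value is a nondecreasing function of the inner product on `[-1, ∞)`, so an inner product
of at most `1 - δ` gives at most `(2 - δ) · exp(-σ²δ)`. The assumption on `σ²` is what makes the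
sum of `N` such values, multiplied by `1 + γ`, at most `1 - γ` times the diagonal value `2`.
-/

section

variable {E : Type*} [NormedAddCommGroup E] [InnerProductSpace ℝ E]

lemma lffKernel_self_of_norm_eq_one (σ : ℝ) {x : E} (hx : ‖x‖ = 1) : lffKernel σ x x = 2 := by
  norm_num [lffKernel, real_inner_self_eq_norm_sq, hx]

lemma lffKernel_nonneg_of_neg_one_le_inner (σ : ℝ) {x y : E} (h : -1 ≤ ⟪x, y⟫) :
    0 ≤ lffKernel σ x y :=
  mul_nonneg (neg_le_iff_add_nonneg'.mp h) (Real.exp_pos _).le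

lemma lffKernel_le_of_inner_le (σ : ℝ) {x y : E} {c : ℝ} (h : -1 ≤ ⟪x, y⟫) (hc : ⟪x, y⟫ ≤ c) :
    lffKernel σ x y ≤ (1 + c) * Real.exp (σ ^ 2 * (c - 1)) := by
  have hc' : 0 ≤ 1 + c := by linarith
  unfold lffKernel
  gcongr

lemma sum_abs_lffKernel_le {ι : Type*} (σ : ℝ) {s : Finset ι} {x : E} {y : ι → E} {c : ℝ}
    (h : ∀ j ∈ s, ⟪x, y j⟫ ∈ Set.Icc (-1) c) :
    ∑ j ∈ s, |lffKernel σ x (y j)| ≤ s.card * ((1 + c) * Real.exp (σ ^ 2 * (c - 1))) := by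
  rw [← nsmul_eq_mul]
  refine Finset.sum_le_card_nsmul _ _ _ fun j hj => ?_
  obtain ⟨hneg_one, hc⟩ := h j hj
  rw [abs_of_nonneg (lffKernel_nonneg_of_neg_one_le_inner σ hneg_one)]
  exact lffKernel_le_of_inner_le σ hneg_one hc

lemma mul_exp_neg_mul_le_of_log_div_le {a b δ t : ℝ} (ha : 0 < a) (hb : 0 < b) (hδ : 0 < δ)
    (h : 1 / δ * Real.log (a / b) ≤ t) : a * Real.exp (-(t * δ)) ≤ b := by
  have hlog : Real.log (a / b) ≤ t * δ := by
    rwa [one_div_mul_eq_div, div_le_iff₀ hδ] at h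
  have hexp : a / b ≤ Real.exp (t * δ) := (Real.log_le_iff_le_exp (div_pos ha hb)).mp hlog
  rwa [Real.exp_neg, ← div_eq_mul_inv, div_le_comm₀ (Real.exp_pos _) hb]

theorem lff_bellman_contraction_condition_general {ι : Type*} {s : Finset ι} (hs : s.Nonempty)
    {x : E} {y : ι → E} (hx : ‖x‖ = 1) {δ : ℝ} (hδ0 : 0 < δ) (hδ2 : δ < 2)
    (hsep : ∀ j ∈ s, ⟪x, y j⟫ ∈ Set.Icc (-1) (1 - δ)) {γ : ℝ} (hγ0 : -1 < γ)
    (hγ1 : γ < 1) {σ : ℝ}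
    (hσ : (1 / δ) * Real.log ((s.card : ℝ) * (1 + γ) * (2 - δ) / (2 * (1 - γ))) ≤ σ ^ 2) :
    (1 + γ) * ∑ j ∈ s, |lffKernel σ x (y j)| ≤ (1 - γ) * lffKernel σ x x := by
  have hcard : (0 : ℝ) < s.card := by exact_mod_cast hs.card_pos
  have hγ : 0 < 1 + γ := by linarith
  have hnum : 0 < s.card * (1 + γ) * (2 - δ) := mul_pos (mul_pos hcard hγ) (sub_pos.mpr hδ2)
  have hden : 0 < 2 * (1 - γ) := mul_pos two_pos (sub_pos.mpr hγ1)
  calc (1 + γ) * ∑ j ∈ s, |lffKernel σ x (y j)|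
      ≤ (1 + γ) * (s.card * ((1 + (1 - δ)) * Real.exp (σ ^ 2 * (1 - δ - 1)))) :=
        mul_le_mul_of_nonneg_left (sum_abs_lffKernel_le σ hsep) hγ.le
    _ = s.card * (1 + γ) * (2 - δ) * Real.exp (-(σ ^ 2 * δ)) := by ring_nf
    _ ≤ 2 * (1 - γ) := mul_exp_neg_mul_le_of_log_div_le hnum hden hδ0 hσ
    _ = (1 - γ) * lffKernel σ x x := by rw [lffKernel_self_of_norm_eq_one σ hx, mul_comm]

end

/-- Key inequality in the proof of Theorem 1: for `N + 1` unit vectors with pairwise inner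
products at most `1 − δ` and `σ² ≥ (1/δ) · log(N(1+γ)(2−δ)/(2(1−γ)))`, the NTK kernel matrix
satisfies Achiam et al.'s diagonal-dominance condition
`(1 + γ) · Σ_{j ≠ i} |k_σ(x_i, x_j)| ≤ (1 − γ) · k_σ(x_i, x_i)`. -/
theorem lff_bellman_contraction_condition {E : Type*} [NormedAddCommGroup E]
    [InnerProductSpace ℝ E] (N : ℕ) (hN : 1 ≤ N) (x : Fin (N + 1) → E)
    (hx : ∀ i, ‖x i‖ = 1) (δ : ℝ) (hδ0 : 0 < δ) (hδ2 : δ < 2)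
    (hsep : ∀ i j, i ≠ j → ⟪x i, x j⟫ ≤ 1 - δ)
    (γ : ℝ) (hγ0 : 0 ≤ γ) (hγ1 : γ < 1) (σ : ℝ) (hσ0 : 0 ≤ σ)
    (hσ : (1 / δ) * Real.log ((N : ℝ) * (1 + γ) * (2 - δ) / (2 * (1 - γ))) ≤ σ ^ 2) :
    ∀ i, (1 + γ) * ∑ j ∈ Finset.univ.erase i, |lffKernel σ (x i) (x j)|
      ≤ (1 - γ) * lffKernel σ (x i) (x i) := by
  intro i
  have hcard : (Finset.univ.erase i).card = N := by simp
  have hne : (Finset.univ.erase i).Nonempty := Finset.card_pos.mp (by omega)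
  exact lff_bellman_contraction_condition_general hne (hx i) hδ0 hδ2
    (fun j hj => ⟨neg_one_le_real_inner_of_norm_eq_one (hx i) (hx j),
      hsep i j (Finset.ne_of_mem_erase hj).symm⟩)
    (by linarith) hγ1 (by rwa [hcard])
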